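/- Let R be a finitely generated ℂ-algebra domain and let r, s, r', s' ∈ R. If the radical of the ideal (r, s) equals the radical of the ideal (r', s'), then the polynomial rings A_{r,s}[T] and A_{r',s'}[T] are isomorphic (as R-algebras, and in particular as ℂ-algebras), where A_{r,s} := R[U,V]/(rU − sV − 1) and A_{r',s'} := R[U',V']/(r'U' − s'V' − 1). -/

import Mathlib

/-! If `r a - s b = 1` has a solution in a ring `A`, then the equation `r U - s V = 1` describes the
line `(a, b) + T (s, r)`, so the algebra `A_{r,s}` formed over `A` is `A[T]`. Over `A = A_{r,s}` the
ideal `(r, s)` becomes the unit ideal, and hence so does `(r', s')`, which has the same radical.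
Thus adjoining to `A_{r,s}` a solution of `r' U' - s' V' = 1` gives `A_{r,s}[T]`. Adjoining the two
solutions in the other order gives `A_{r',s'}[T]`, and the order does not matter. -/

open MvPolynomial

/-- `A_{r,s} = R[U,V]/(rU − sV − 1)`. -/
noncomputable abbrev Ars (R : Type) [CommRing R] (r s : R) : Type :=
  MvPolynomial (Fin 2) R ⧸ Ideal.span {(C r * X 0 - C s * X 1 - 1 : MvPolynomial (Fin 2) R)}

open scoped Polynomial

theorem ideal_map_eq_top_of_le_radical {R S : Type*} [CommSemiring R] [CommSemiring S]
    {I J : Ideal R} (f : R →+* S) (hIJ : I ≤ J.radical) (hI : I.map f = ⊤) : J.map f = ⊤ := by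
  rw [← Ideal.radical_eq_top, eq_top_iff, ← hI]
  exact (Ideal.map_mono hIJ).trans (Ideal.map_radical_le f)

theorem ideal_span_pair_eq_top_iff_exists_sub {R : Type*} [CommRing R] {r s : R} :
    Ideal.span {r, s} = ⊤ ↔ ∃ a b, r * a - s * b = 1 := by
  rw [Ideal.eq_top_iff_one, Ideal.mem_span_pair]
  constructor
  · rintro ⟨a, b, h⟩
    exact ⟨a, -b, by linear_combination h⟩
  · rintro ⟨a, b, h⟩
    exact ⟨a, -b, by linear_combination h⟩

theorem map_mul_sub_map_mul_eq_one {R S : Type*} [CommRing R] [CommRing S] (f : R →+* S)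
    {r s a b : R} (h : r * a - s * b = 1) : f r * f a - f s * f b = 1 := by
  rw [← map_mul, ← map_mul, ← map_sub, h, map_one]

namespace Ars

section UniversalProperty

variable {A : Type} [CommRing A] (r s : A)

/-- The class of `U` in `A_{r,s}`. -/
noncomputable def u : Ars A r s := Ideal.Quotient.mk _ (X 0)

/-- The class of `V` in `A_{r,s}`. -/
noncomputable def v : Ars A r s := Ideal.Quotient.mk _ (X 1)

theorem algebraMap_mul_u_sub_algebraMap_mul_v :
    algebraMap A (Ars A r s) r * u r s - algebraMap A (Ars A r s) s * v r s = 1 :=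
  Ideal.Quotient.eq.mpr (Ideal.subset_span rfl)

theorem map_span_pair_eq_top :
    (Ideal.span {r, s}).map (algebraMap A (Ars A r s)) = ⊤ := by
  rw [Ideal.map_span, Set.image_pair, ideal_span_pair_eq_top_iff_exists_sub]
  exact ⟨u r s, v r s, algebraMap_mul_u_sub_algebraMap_mul_v r s⟩

variable {r s} {R B : Type*} [CommSemiring R] [Algebra R A] [CommRing B] [Algebra R B]

/-- The extension of `f : A → B` to `A_{r,s}` that sends `(u, v)` to a solution `(x, y)` of
`f(r) x - f(s) y = 1`. The base ring `R` may differ from `A`, so that constructions over different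
`R`-algebras `A` can be compared. -/
noncomputable def lift (f : A →ₐ[R] B) (x y : B) (h : f r * x - f s * y = 1) :
    Ars A r s →ₐ[R] B :=
  Ideal.Quotient.liftₐ _ (aevalTower f ![x, y]) <| by
    change Ideal.span _ ≤ RingHom.ker (aevalTower f ![x, y])
    rw [Ideal.span_singleton_le_iff_mem, RingHom.mem_ker]
    simp [h]

variable {f : A →ₐ[R] B} {x y : B} (h : f r * x - f s * y = 1)

@[simp]
theorem lift_algebraMap (a : A) : lift f x y h (algebraMap A (Ars A r s) a) = f a :=
  aevalTower_C f ![x, y] a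

@[simp]
theorem lift_u : lift f x y h (u r s) = x :=
  aevalTower_X f ![x, y] 0

@[simp]
theorem lift_v : lift f x y h (v r s) = y :=
  aevalTower_X f ![x, y] 1

theorem algHom_ext {f g : Ars A r s →ₐ[R] B}
    (hA : f.comp (IsScalarTower.toAlgHom R A _) = g.comp (IsScalarTower.toAlgHom R A _))
    (hu : f (u r s) = g (u r s)) (hv : f (v r s) = g (v r s)) : f = g :=
  Ideal.Quotient.algHom_ext _ <| MvPolynomial.algHom_ext' hA <| Fin.forall_fin_two.mpr ⟨hu, hv⟩

end UniversalProperty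

section Polynomial

variable {A : Type} [CommRing A] {r s a b : A}

/-- The morphism `A_{r,s} → A[T]` parametrizing the line `r U - s V = 1` by
`T ↦ (a + s T, b + r T)`, for a point `(a, b)` of the line. -/
noncomputable def toPolynomial (h : r * a - s * b = 1) : Ars A r s →ₐ[A] A[X] :=
  lift (Algebra.ofId A A[X]) (Polynomial.C a + Polynomial.C s * Polynomial.X)
    (Polynomial.C b + Polynomial.C r * Polynomial.X) <| by
      simp only [Algebra.ofId_apply, Polynomial.algebraMap_eq]
      linear_combination map_mul_sub_map_mul_eq_one Polynomial.C h

variable (r s a b) in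
/-- The morphism `A[T] → A_{r,s}` given by the coordinate `T = a v - b u`. -/
noncomputable def ofPolynomial : A[X] →ₐ[A] Ars A r s :=
  Polynomial.aeval (algebraMap A _ a * v r s - algebraMap A _ b * u r s)

theorem toPolynomial_comp_ofPolynomial (h : r * a - s * b = 1) :
    (toPolynomial h).comp (ofPolynomial r s a b) = AlgHom.id A A[X] := by
  apply Polynomial.algHom_ext
  simp only [toPolynomial, ofPolynomial, AlgHom.comp_apply, AlgHom.id_apply, Polynomial.aeval_X,
    map_sub, map_mul, AlgHom.commutes, lift_u, lift_v, Polynomial.algebraMap_eq]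
  linear_combination Polynomial.X * map_mul_sub_map_mul_eq_one Polynomial.C h

theorem ofPolynomial_comp_toPolynomial (h : r * a - s * b = 1) :
    (ofPolynomial r s a b).comp (toPolynomial h) = AlgHom.id A (Ars A r s) := by
  have hab := map_mul_sub_map_mul_eq_one (algebraMap A (Ars A r s)) h
  have huv := algebraMap_mul_u_sub_algebraMap_mul_v r s
  apply algHom_ext (Subsingleton.elim _ _) <;>
    simp only [toPolynomial, ofPolynomial, AlgHom.comp_apply, AlgHom.id_apply, lift_u, lift_v,
      map_add, map_mul, Polynomial.aeval_X, Polynomial.aeval_C]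
  · linear_combination u r s * hab - algebraMap A _ a * huv
  · linear_combination v r s * hab - algebraMap A _ b * huv

/-- The isomorphism `A_{r,s} ≅ A[T]` determined by a solution of `r a - s b = 1` in `A`. -/
noncomputable def equivPolynomial (h : r * a - s * b = 1) : Ars A r s ≃ₐ[A] A[X] :=
  AlgEquiv.ofAlgHom (toPolynomial h) (ofPolynomial r s a b)
    (toPolynomial_comp_ofPolynomial h) (ofPolynomial_comp_toPolynomial h)

theorem nonempty_algEquiv_polynomial (h : Ideal.span {r, s} = ⊤) :
    Nonempty (Ars A r s ≃ₐ[A] A[X]) := by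
  obtain ⟨a, b, hab⟩ := ideal_span_pair_eq_top_iff_exists_sub.mp h
  exact ⟨equivPolynomial hab⟩

end Polynomial

section BaseChange

variable {R : Type} [CommRing R] (A : Type) [CommRing A] [Algebra R A] (r s : R)

/-- The canonical morphism from the algebra `A_{r,s}` formed over `R` to the one formed over an
`R`-algebra `A`. -/
noncomputable def mapBase : Ars R r s →ₐ[R] Ars A (algebraMap R A r) (algebraMap R A s) :=
  lift (Algebra.ofId R _) (u _ _) (v _ _) <| by
    simpa only [Algebra.ofId_apply, IsScalarTower.algebraMap_apply R A (Ars A _ _)] using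
      algebraMap_mul_u_sub_algebraMap_mul_v (algebraMap R A r) (algebraMap R A s)

@[simp]
theorem mapBase_u : mapBase A r s (u r s) = u (algebraMap R A r) (algebraMap R A s) :=
  lift_u _

@[simp]
theorem mapBase_v : mapBase A r s (v r s) = v (algebraMap R A r) (algebraMap R A s) :=
  lift_v _

end BaseChange

section Double

variable {R : Type} [CommRing R] (r₁ s₁ r₂ s₂ : R)

/-- The `R`-algebra obtained from `R` by adjoining first a solution of `r₁ u₁ - s₁ v₁ = 1` and then
a solution of `r₂ u₂ - s₂ v₂ = 1`. -/
noncomputable abbrev Double : Type :=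
  Ars (Ars R r₁ s₁) (algebraMap R (Ars R r₁ s₁) r₂) (algebraMap R (Ars R r₁ s₁) s₂)

/-- The morphism between the two iterated algebras that preserves both adjoined solutions. -/
noncomputable def swapHom : Double r₁ s₁ r₂ s₂ →ₐ[R] Double r₂ s₂ r₁ s₁ :=
  lift (mapBase (Ars R r₂ s₂) r₁ s₁) (algebraMap _ _ (u r₂ s₂)) (algebraMap _ _ (v r₂ s₂)) <| by
    simpa only [AlgHom.commutes,
        IsScalarTower.algebraMap_apply R (Ars R r₂ s₂) (Double r₂ s₂ r₁ s₁)] using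
      map_mul_sub_map_mul_eq_one (algebraMap (Ars R r₂ s₂) (Double r₂ s₂ r₁ s₁))
        (algebraMap_mul_u_sub_algebraMap_mul_v r₂ s₂)

theorem swapHom_comp_swapHom :
    (swapHom r₂ s₂ r₁ s₁).comp (swapHom r₁ s₁ r₂ s₂) = AlgHom.id R (Double r₁ s₁ r₂ s₂) := by
  apply algHom_ext
  · apply algHom_ext (Subsingleton.elim _ _) <;> simp [swapHom]
  all_goals simp [swapHom]

/-- The order in which the two solutions are adjoined does not matter. -/
noncomputable def swapEquiv : Double r₁ s₁ r₂ s₂ ≃ₐ[R] Double r₂ s₂ r₁ s₁ :=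
  AlgEquiv.ofAlgHom (swapHom r₁ s₁ r₂ s₂) (swapHom r₂ s₂ r₁ s₁)
    (swapHom_comp_swapHom r₂ s₂ r₁ s₁) (swapHom_comp_swapHom r₁ s₁ r₂ s₂)

variable {r₁ s₁ r₂ s₂} in
theorem nonempty_double_algEquiv_polynomial
    (h : Ideal.span {r₁, s₁} ≤ (Ideal.span {r₂, s₂}).radical) :
    Nonempty (Double r₁ s₁ r₂ s₂ ≃ₐ[R] (Ars R r₁ s₁)[X]) := by
  have htop := ideal_map_eq_top_of_le_radical _ h (map_span_pair_eq_top r₁ s₁)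
  rw [Ideal.map_span, Set.image_pair] at htop
  obtain ⟨e⟩ := nonempty_algEquiv_polynomial htop
  exact ⟨e.restrictScalars R⟩

end Double

end Ars

theorem stmt13_general {R : Type} [CommRing R] (r s r' s' : R)
    (hrad : (Ideal.span {r, s}).radical = (Ideal.span {r', s'}).radical) :
    Nonempty (Polynomial (Ars R r s) ≃ₐ[R] Polynomial (Ars R r' s')) := by
  obtain ⟨e₁⟩ := Ars.nonempty_double_algEquiv_polynomial (Ideal.le_radical.trans hrad.le)
  obtain ⟨e₂⟩ := Ars.nonempty_double_algEquiv_polynomial (Ideal.le_radical.trans hrad.ge)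
  exact ⟨e₁.symm.trans <| (Ars.swapEquiv r s r' s').trans e₂⟩

/-- Let `R` be a finitely generated `ℂ`-algebra domain and `r, s, r', s' ∈ R`.  If
`rad(r, s) = rad(r', s')`, then `A_{r,s}[T] ≅ A_{r',s'}[T]` as `R`-algebras (in particular
as `ℂ`-algebras). -/
theorem stmt13 {R : Type} [CommRing R] [IsDomain R] [Algebra ℂ R] [Algebra.FiniteType ℂ R]
    (r s r' s' : R)
    (hrad : (Ideal.span {r, s}).radical = (Ideal.span {r', s'}).radical) :
    Nonempty (Polynomial (Ars R r s) ≃ₐ[R] Polynomial (Ars R r' s')) :=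
  stmt13_general r s r' s' hrad
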